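/- There is an absolute constant C such that the following holds. Let Q ≥ 1, let u₂ be a rational integer with Q/√2 < u₂ ≤ Q, and let x₂, y₂ ∈ ℤ be such that x₂ + y₂·i and u₂ are coprime in Z[i]. Let γ ∈ ℤ, let U, V ≥ 0 be real, and set d = gcd(x₂, u₂). Then #{(α,β) ∈ ℤ² : |α| ≤ U, |β| ≤ V, α·x₂ − β·y₂ ≡ γ (mod u₂)} ≤ C·(1 + V/d)·(1 + U·d/u₂); in particular this count is ≤ C'·(1 + U + V + U·V/Q) for an absolute constant C'. -/

import Mathlib

noncomputable section

/-- Two Gaussian integers are coprime if their only common divisors are units. -/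
def GCoprime (r q : GaussianInt) : Prop :=
  ∀ d : GaussianInt, d ∣ r → d ∣ q → IsUnit d

/-!
Put `d = gcd(x₂, u₂)`. Reducing the congruence modulo `d` leaves a condition on `β` alone, and since
`y₂` is invertible modulo `d` it confines `β` to one residue class modulo `d`. Once `β` is fixed,
`x₂` can be cancelled at the cost of shrinking the modulus, so `α` lies in one residue class modulo
`u₂ / d`. The rational integer `gcd(d, y₂)` divides both `x₂ + y₂ i` and `u₂`, which is where
Gaussian coprimality enters. The second bound follows by expanding the product, because
`1 ≤ d ≤ u₂` and `Q < √2 u₂`.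
-/

section Counting

variable {R : Type*} [Field R] [LinearOrder R] [IsStrictOrderedRing R] [FloorRing R]

lemma ncard_intCast_preimage_Icc_le {a b : R} (hab : a ≤ b) :
    ((((↑) : ℤ → R) ⁻¹' Set.Icc a b).ncard : R) ≤ 1 + (b - a) := by
  rw [Int.preimage_Icc, ← Finset.coe_Icc, Set.ncard_coe_finset, Int.card_Icc]
  have hfloor : (⌊b⌋ : R) ≤ b := Int.floor_le b
  have hceil : a ≤ (⌈a⌉ : R) := Int.le_ceil a
  rcases le_total 0 (⌊b⌋ + 1 - ⌈a⌉) with hnonneg | hneg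
  · have htoNat : (((⌊b⌋ + 1 - ⌈a⌉).toNat : ℤ) : R) = ((⌊b⌋ + 1 - ⌈a⌉ : ℤ) : R) := by
      rw [Int.toNat_of_nonneg hnonneg]
    push_cast at htoNat
    linarith
  · rw [Int.toNat_of_nonpos hneg, Nat.cast_zero]
    linarith

lemma ncard_le_of_forall_modEq {s : Set ℤ} {a b : R} {m : ℤ} (hm : 0 < m) (hab : a ≤ b)
    (hbox : ∀ k ∈ s, (k : R) ∈ Set.Icc a b) (hmod : ∀ k ∈ s, ∀ l ∈ s, k ≡ l [ZMOD m]) :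
    (s.ncard : R) ≤ 1 + (b - a) / m := by
  have hmR : (0 : R) < m := Int.cast_pos.2 hm
  rcases s.eq_empty_or_nonempty with rfl | ⟨k₀, hk₀⟩
  · have : 0 ≤ (b - a) / m := div_nonneg (sub_nonneg.2 hab) hmR.le
    rw [Set.ncard_empty, Nat.cast_zero]
    linarith
  set T : Set ℤ := (↑) ⁻¹' Set.Icc ((a - k₀) / m) ((b - k₀) / m) with hT
  have hTfin : T.Finite := by
    rw [hT, Int.preimage_Icc]
    exact Set.finite_Icc _ _
  have hsub : s ⊆ (fun t ↦ k₀ + m * t) '' T := by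
    intro k hk
    obtain ⟨t, ht⟩ := (hmod k₀ hk₀ k hk).dvd
    have htR : (k : R) = k₀ + m * t := by exact_mod_cast (sub_eq_iff_eq_add'.1 ht)
    obtain ⟨hak, hkb⟩ := hbox k hk
    refine ⟨t, ⟨?_, ?_⟩, by linarith⟩
    · rw [div_le_iff₀ hmR]
      linarith
    · rw [le_div_iff₀ hmR]
      linarith
  calc (s.ncard : R) ≤ T.ncard := by
        exact_mod_cast (Set.ncard_le_ncard hsub (hTfin.image _)).trans (Set.ncard_image_le hTfin)
    _ ≤ 1 + ((b - k₀) / m - (a - k₀) / m) := ncard_intCast_preimage_Icc_le (by gcongr)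
    _ = 1 + (b - a) / m := by ring

end Counting

lemma ncard_le_mul_ncard_image {α β R : Type*} [Semiring R] [PartialOrder R] [IsOrderedRing R]
    {s : Set α} (hs : s.Finite) (f : α → β) {M : R}
    (hM : ∀ b ∈ f '' s, ((s ∩ f ⁻¹' {b}).ncard : R) ≤ M) :
    (s.ncard : R) ≤ (f '' s).ncard * M := by
  classical
  lift s to Finset α using hs
  have hfiber (b : β) : (s : Set α) ∩ f ⁻¹' {b} = ({a ∈ s | f a = b} : Finset α) := by
    ext a
    simp
  simp only [← Finset.coe_image, hfiber, Set.ncard_coe_finset, Finset.mem_coe] at hM ⊢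
  rw [Finset.card_eq_sum_card_image f s, Nat.cast_sum, ← nsmul_eq_mul]
  exact Finset.sum_le_card_nsmul _ _ _ hM

section Congruence

variable {x y u a a' b b' : ℤ}

lemma modEq_gcd_of_mul_sub_mul_modEq (hcop : IsCoprime (Int.gcd x u : ℤ) y)
    (h : a * x - b * y ≡ a' * x - b' * y [ZMOD u]) : b ≡ b' [ZMOD Int.gcd x u] := by
  have hx (c : ℤ) : c * x ≡ 0 [ZMOD Int.gcd x u] :=
    Int.modEq_zero_iff_dvd.2 ((Int.gcd_dvd_left ..).mul_left c)
  have hby : b * y ≡ b' * y [ZMOD Int.gcd x u] := by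
    have hsub := ((hx a).trans (hx a').symm).sub (h.of_dvd (Int.gcd_dvd_right ..))
    simpa only [sub_sub_cancel] using hsub
  rw [Int.modEq_iff_dvd, ← sub_mul] at hby
  exact Int.modEq_iff_dvd.2 (hcop.dvd_of_dvd_mul_right hby)

lemma modEq_div_gcd_of_mul_sub_modEq (hu : 0 < u) {c : ℤ}
    (h : a * x - c ≡ a' * x - c [ZMOD u]) : a ≡ a' [ZMOD u / Int.gcd x u] := by
  rw [Int.gcd_comm]
  exact Int.ModEq.cancel_right_div_gcd hu (by simpa only [sub_add_cancel] using h.add_right c)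

lemma GCoprime.isCoprime_gcd (h : GCoprime ⟨x, y⟩ ⟨u, 0⟩) : IsCoprime (Int.gcd x u : ℤ) y := by
  refine IsRelPrime.isCoprime fun z hz hzy ↦ ?_
  have hunit : IsUnit (z : GaussianInt) :=
    h z ((Zsqrtd.intCast_dvd _ _).2 ⟨hz.trans (Int.gcd_dvd_left ..), hzy⟩)
      ((Zsqrtd.intCast_dvd _ _).2 ⟨hz.trans (Int.gcd_dvd_right ..), dvd_zero z⟩)
  rw [Zsqrtd.isUnit_iff_norm_isUnit, Zsqrtd.norm_intCast] at hunit
  exact isUnit_of_mul_isUnit_left hunit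

end Congruence

/-- The integer solutions `(α, β)` of `α x - β y ≡ γ (mod u)` in the rectangle `I × J`, given by
real sets `I` and `J` so that its sides need not have integer endpoints. -/
def congruenceBox (x y u γ : ℤ) (I J : Set ℝ) : Set (ℤ × ℤ) :=
  {p | (p.1 : ℝ) ∈ I ∧ (p.2 : ℝ) ∈ J ∧ p.1 * x - p.2 * y ≡ γ [ZMOD u]}

namespace congruenceBox

variable {x y u : ℤ} (γ : ℤ) {A B A' B' : ℝ}

lemma finite (x y u : ℤ) (A B A' B' : ℝ) :
    (congruenceBox x y u γ (Set.Icc A B) (Set.Icc A' B')).Finite := by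
  refine ((Set.finite_Icc ⌈A⌉ ⌊B⌋).prod (Set.finite_Icc ⌈A'⌉ ⌊B'⌋)).subset ?_
  rintro ⟨α, β⟩ ⟨hα, hβ, -⟩
  exact ⟨by rwa [← Int.preimage_Icc], by rwa [← Int.preimage_Icc]⟩

lemma ncard_image_snd_le (hu : u ≠ 0) (hcop : IsCoprime (Int.gcd x u : ℤ) y) (I : Set ℝ)
    (hAB' : A' ≤ B') :
    ((Prod.snd '' congruenceBox x y u γ I (Set.Icc A' B')).ncard : ℝ)
      ≤ 1 + (B' - A') / Int.gcd x u := by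
  have hd : (0 : ℤ) < Int.gcd x u := Int.natCast_pos.2 (Int.gcd_pos_of_ne_zero_right x hu)
  rw [← Int.cast_natCast (Int.gcd x u)]
  refine ncard_le_of_forall_modEq hd hAB' ?_ ?_
  · rintro _ ⟨p, hp, rfl⟩
    exact hp.2.1
  · rintro _ ⟨p, hp, rfl⟩ _ ⟨q, hq, rfl⟩
    exact modEq_gcd_of_mul_sub_mul_modEq hcop (hp.2.2.trans hq.2.2.symm)

lemma ncard_inter_snd_preimage_singleton_le (hu : 0 < u) (x y : ℤ) (hAB : A ≤ B) (J : Set ℝ)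
    (β : ℤ) :
    ((congruenceBox x y u γ (Set.Icc A B) J ∩ Prod.snd ⁻¹' {β}).ncard : ℝ)
      ≤ 1 + (B - A) * Int.gcd x u / u := by
  have hinj : Set.InjOn Prod.fst
      (congruenceBox x y u γ (Set.Icc A B) J ∩ Prod.snd ⁻¹' {β}) :=
    fun p hp q hq hpq ↦ Prod.ext hpq (hp.2.trans hq.2.symm)
  have hdvd : (Int.gcd x u : ℤ) ∣ u := Int.gcd_dvd_right ..
  have hd : (Int.gcd x u : ℤ) ≠ 0 := ne_zero_of_dvd_ne_zero hu.ne' hdvd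
  have hm : 0 < u / Int.gcd x u := Int.ediv_pos_of_pos_of_dvd hu (Int.natCast_nonneg _) hdvd
  have hlen : (B - A) / (u / Int.gcd x u : ℤ) = (B - A) * Int.gcd x u / u := by
    rw [Int.cast_div hdvd (Int.cast_ne_zero.2 hd), Int.cast_natCast, div_div_eq_mul_div]
  rw [← hinj.ncard_image, ← hlen]
  refine ncard_le_of_forall_modEq hm hAB ?_ ?_
  · rintro _ ⟨p, ⟨hp, -⟩, rfl⟩
    exact hp.1
  · rintro _ ⟨⟨α, _⟩, ⟨hp, rfl⟩, rfl⟩ _ ⟨⟨α', _⟩, ⟨hq, rfl⟩, rfl⟩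
    exact modEq_div_gcd_of_mul_sub_modEq hu (hp.2.2.trans hq.2.2.symm)

lemma ncard_le (hu : 0 < u) (hcop : IsCoprime (Int.gcd x u : ℤ) y) (hAB : A ≤ B)
    (hAB' : A' ≤ B') :
    ((congruenceBox x y u γ (Set.Icc A B) (Set.Icc A' B')).ncard : ℝ)
      ≤ (1 + (B' - A') / Int.gcd x u) * (1 + (B - A) * Int.gcd x u / u) := by
  have : (0 : ℝ) < u := Int.cast_pos.2 hu
  have : 0 ≤ B - A := sub_nonneg.2 hAB
  refine (ncard_le_mul_ncard_image (finite γ x y u A B A' B') Prod.snd fun β _ ↦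
    ncard_inter_snd_preimage_singleton_le γ hu x y hAB _ β).trans ?_
  gcongr
  exact ncard_image_snd_le γ hu.ne' hcop _ hAB'

end congruenceBox

lemma one_add_div_mul_one_add_mul_div_le {d u U V : ℝ} (hd : 1 ≤ d) (hdu : d ≤ u) (hU : 0 ≤ U)
    (hV : 0 ≤ V) : (1 + V / d) * (1 + U * d / u) ≤ 1 + U + V + U * V / u := by
  have hd₀ : 0 < d := one_pos.trans_le hd
  have hu₀ : 0 < u := hd₀.trans_le hdu
  have hVd : V / d ≤ V := div_le_self hV hd
  have hUd : U * d / u ≤ U := div_le_of_le_mul₀ hu₀.le hU (by gcongr)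
  calc (1 + V / d) * (1 + U * d / u) = 1 + U * d / u + V / d + U * V / u := by
        field_simp
        ring
    _ ≤ 1 + U + V + U * V / u := by gcongr

lemma ncard_abs_le_modEq_le {x y u : ℤ} (hu : 0 < u) (hcop : IsCoprime (Int.gcd x u : ℤ) y)
    (γ : ℤ) {U V : ℝ} (hU : 0 ≤ U) (hV : 0 ≤ V) :
    (Set.ncard {p : ℤ × ℤ | |(p.1 : ℝ)| ≤ U ∧ |(p.2 : ℝ)| ≤ V ∧
        p.1 * x - p.2 * y ≡ γ [ZMOD u]} : ℝ)
      ≤ 4 * (1 + V / (Int.gcd x u : ℝ)) * (1 + U * (Int.gcd x u : ℝ) / (u : ℝ)) := by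
  have : (0 : ℝ) < u := Int.cast_pos.2 hu
  simp only [abs_le]
  calc _ ≤ (1 + (V - -V) / Int.gcd x u) * (1 + (U - -U) * Int.gcd x u / u) :=
        congruenceBox.ncard_le γ hu hcop (neg_le_self hU) (neg_le_self hV)
    _ = (1 + 2 * (V / Int.gcd x u)) * (1 + 2 * (U * Int.gcd x u / u)) := by ring
    _ ≤ (2 + 2 * (V / Int.gcd x u)) * (2 + 2 * (U * Int.gcd x u / u)) := by
        gcongr <;> norm_num
    _ = 4 * (1 + V / Int.gcd x u) * (1 + U * Int.gcd x u / u) := by ring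

theorem congruence_count_general {Q K : ℝ} (hQ : 0 < Q) (hK : 1 ≤ K) {u : ℤ} (hQu : Q ≤ u * K)
    {x y : ℤ} (hcop : IsCoprime (Int.gcd x u : ℤ) y) (γ : ℤ) {U V : ℝ} (hU : 0 ≤ U) (hV : 0 ≤ V) :
    (Set.ncard {p : ℤ × ℤ | |(p.1 : ℝ)| ≤ U ∧ |(p.2 : ℝ)| ≤ V ∧
        p.1 * x - p.2 * y ≡ γ [ZMOD u]} : ℝ)
      ≤ 4 * (1 + V / (Int.gcd x u : ℝ)) * (1 + U * (Int.gcd x u : ℝ) / (u : ℝ)) ∧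
    (Set.ncard {p : ℤ × ℤ | |(p.1 : ℝ)| ≤ U ∧ |(p.2 : ℝ)| ≤ V ∧
        p.1 * x - p.2 * y ≡ γ [ZMOD u]} : ℝ)
      ≤ 4 * K * (1 + U + V + U * V / Q) := by
  have hK₀ : 0 < K := one_pos.trans_le hK
  have huR : (0 : ℝ) < u := pos_of_mul_pos_left (hQ.trans_le hQu) hK₀.le
  have hu : 0 < u := Int.cast_pos.1 huR
  have hcount := ncard_abs_le_modEq_le hu hcop γ hU hV
  refine ⟨hcount, hcount.trans ?_⟩
  have hd : (1 : ℝ) ≤ Int.gcd x u :=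
    Nat.one_le_cast.2 (Int.gcd_pos_of_ne_zero_right x hu.ne')
  have hdu : (Int.gcd x u : ℝ) ≤ u := by
    exact_mod_cast Int.le_of_dvd hu (Int.gcd_dvd_right x u)
  have hUVQ : U * V / u ≤ K * (U * V / Q) := by
    rw [div_le_iff₀ huR]
    calc U * V = Q * (U * V / Q) := (mul_div_cancel₀ _ hQ.ne').symm
      _ ≤ u * K * (U * V / Q) := by gcongr
      _ = K * (U * V / Q) * u := by ring
  calc _ = 4 * ((1 + V / Int.gcd x u) * (1 + U * Int.gcd x u / u)) := mul_assoc ..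
    _ ≤ 4 * (1 + U + V + U * V / u) := by
        gcongr
        exact one_add_div_mul_one_add_mul_div_le hd hdu hU hV
    _ ≤ 4 * (K * (1 + U + V) + K * (U * V / Q)) := by
        gcongr
        exact le_mul_of_one_le_left (by positivity) hK
    _ = 4 * K * (1 + U + V + U * V / Q) := by ring

/-- Counting lattice points `(α,β)` with `|α| ≤ U`, `|β| ≤ V` and
`α x₂ - β y₂ ≡ γ (mod u₂)`. -/
theorem congruence_count :
    ∃ C : ℝ, 0 < C ∧ ∃ C' : ℝ, 0 < C' ∧
      ∀ Q : ℝ, 1 ≤ Q → ∀ u₂ : ℤ, Q / Real.sqrt 2 < (u₂ : ℝ) → (u₂ : ℝ) ≤ Q →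
      ∀ x₂ y₂ : ℤ, GCoprime ⟨x₂, y₂⟩ (⟨u₂, 0⟩ : GaussianInt) →
      ∀ γ : ℤ, ∀ U V : ℝ, 0 ≤ U → 0 ≤ V →
      (Set.ncard {p : ℤ × ℤ | |(p.1 : ℝ)| ≤ U ∧ |(p.2 : ℝ)| ≤ V ∧
          p.1 * x₂ - p.2 * y₂ ≡ γ [ZMOD u₂]} : ℝ)
        ≤ C * (1 + V / (Int.gcd x₂ u₂ : ℝ)) * (1 + U * (Int.gcd x₂ u₂ : ℝ) / (u₂ : ℝ)) ∧
      (Set.ncard {p : ℤ × ℤ | |(p.1 : ℝ)| ≤ U ∧ |(p.2 : ℝ)| ≤ V ∧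
          p.1 * x₂ - p.2 * y₂ ≡ γ [ZMOD u₂]} : ℝ)
        ≤ C' * (1 + U + V + U * V / Q) := by
  exact ⟨4, by norm_num, 4 * √2, by positivity, fun Q hQ u hQu _ x y hxy γ U V hU hV ↦
    congruence_count_general (one_pos.trans_le hQ) (Real.one_le_sqrt.2 one_le_two)
      ((div_lt_iff₀ (by positivity)).1 hQu).le hxy.isCoprime_gcd γ hU hV⟩
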